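/- arXiv:2206.12801 — 2 statements merged into one kernel-verified Lean document; each statement's English description precedes it below -/
import Mathlib

section
/- For all real numbers 1≤δ₁<δ₂: I_{δ₁}(μ) ≥ I_{δ₂}(μ) for every μ∈𝒫(V), and moreover there exists μ₀∈𝒫(V) (depending on δ₁ and δ₂) such that I_{δ₁}(μ₀) > I_{δ₂}(μ₀). -/
open scoped BigOperators Classical ENNReal
open Filter Topology

noncomputable section
namespace ORRW

/-- Probability measures on a finite type `A`, topologized as a subset of `ℝ^A`. -/
abbrev ProbMeas (A : Type) [Fintype A] : Type :=
  {p : A → ℝ // (∀ a, 0 ≤ p a) ∧ ∑ a, p a = 1}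

/-- Relative entropy `R(γ‖ρ)` between two finitely supported "rows", valued in `EReal`,
with `+∞` when absolute continuity fails. -/
def relEnt {A : Type} [Fintype A] (γ ρ : A → ℝ) : EReal :=
  if ∀ a, ρ a = 0 → γ a = 0 then ((∑ a, γ a * Real.log (γ a / ρ a) : ℝ) : EReal)
  else (⊤ : EReal)

/-- `∫ R(q‖p) dν = Σ_a ν(a) · R(q(a,·)‖p(a,·))`. -/
def relEntInt {A : Type} [Fintype A] (ν : A → ℝ) (q p : A → A → ℝ) : EReal :=
  ∑ a, (ν a : EReal) * relEnt (q a) (p a)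

/-- `ν` is an invariant measure of the kernel `q`. -/
def Invariant {A : Type} [Fintype A] (ν : A → ℝ) (q : A → A → ℝ) : Prop :=
  ∀ y, ∑ x, ν x * q x y = ν y

/-- Extended-real logarithm: `⊥` at nonpositive arguments. -/
def elog (x : ℝ) : EReal := if x ≤ 0 then (⊥ : EReal) else ((Real.log x : ℝ) : EReal)

/-- Empirical measure of a finite trajectory `f : Fin (n+1) → A`. -/
def empMeas {A : Type} [Fintype A] [DecidableEq A] (n : ℕ) (f : Fin (n + 1) → A) :
    ProbMeas A :=
  ⟨fun a => ((Finset.univ.filter (fun i => f i = a)).card : ℝ) / (n + 1),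
    fun a => by positivity, by
      have key : ∑ a : A, ((Finset.univ.filter (fun i => f i = a)).card) = n + 1 := by
        have h := Finset.card_eq_sum_card_fiberwise
          (s := (Finset.univ : Finset (Fin (n + 1)))) (t := (Finset.univ : Finset A))
          (f := f) (fun i _ => Finset.mem_univ (f i))
        simpa using h.symm
      have key' : ∑ a : A, (((Finset.univ.filter (fun i => f i = a)).card : ℝ)) = (n : ℝ) + 1 := by
        have h2 := congrArg (fun m : ℕ => (m : ℝ)) key
        push_cast at h2
        simpa using h2
      rw [← Finset.sum_div, key', div_self (by positivity)]⟩

section Graph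

variable {V : Type} [Fintype V] [DecidableEq V]

/-- Weight of an edge given the set `F` of already traversed edges. -/
def gw (δ : ℝ) (F : Finset (Sym2 V)) (e : Sym2 V) : ℝ := if e ∈ F then δ else 1

/-- The transition kernel `p̂_F` on `V`. -/
def phat (G : SimpleGraph V) [DecidableRel G.Adj] (δ : ℝ) (F : Finset (Sym2 V))
    (x y : V) : ℝ :=
  if G.Adj x y then gw δ F s(x, y) / ∑ z ∈ G.neighborFinset x, gw δ F s(x, z) else 0

/-- Two edges are adjacent iff they share a vertex. -/
def edgeAdj (e e' : Sym2 V) : Prop := ∃ v, v ∈ e ∧ v ∈ e'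

/-- `x` is a vertex of the edge set `F`. -/
def memVerts (F : Finset (Sym2 V)) (x : V) : Prop := ∃ e ∈ F, x ∈ e

/-- `𝒯_G`: stochastic matrices on `V` adapted to `G`. -/
def TG (G : SimpleGraph V) : Set (V → V → ℝ) :=
  {q | (∀ x y, 0 ≤ q x y) ∧ (∀ x, ∑ y, q x y = 1) ∧ ∀ x y, q x y ≠ 0 → G.Adj x y}

/-- `𝒯(F)`: stochastic kernels from the vertex set of `F` to `V`, supported on `F`. -/
def TE (F : Finset (Sym2 V)) : Set (V → V → ℝ) :=
  {q | (∀ x y, 0 ≤ q x y) ∧ (∀ x, memVerts F x → ∑ y, q x y = 1) ∧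
    ∀ x y, q x y ≠ 0 → s(x, y) ∈ F}

/-- `ℰ`: admissible increasing sequences of traversed edge sets. -/
def seqE (G : SimpleGraph V) [DecidableRel G.Adj] (v₁ : V) :
    Set (Fin G.edgeFinset.card → Finset (Sym2 V)) :=
  {Es | (∀ k, Es k ⊆ G.edgeFinset) ∧ (∀ k, (Es k).card = (k : ℕ) + 1) ∧
    (∀ k l : Fin G.edgeFinset.card, (k : ℕ) + 1 = (l : ℕ) → Es k ⊂ Es l) ∧
    (∀ k : Fin G.edgeFinset.card, (k : ℕ) = 0 → ∃ e ∈ Es k, v₁ ∈ e) ∧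
    (∀ k l : Fin G.edgeFinset.card, (k : ℕ) + 1 = (l : ℕ) →
      ∀ e ∈ Es l \ Es k, ∃ e' ∈ Es k, edgeAdj e e')}

/-- The rate function `I_δ`. -/
def Ifun (G : SimpleGraph V) [DecidableRel G.Adj] (v₁ : V) (δ : ℝ) (ν : ProbMeas V) : EReal :=
  sInf { c : EReal |
    ∃ (νs : Fin G.edgeFinset.card → ProbMeas V) (r : Fin G.edgeFinset.card → ℝ)
      (Es : Fin G.edgeFinset.card → Finset (Sym2 V))
      (qs : Fin G.edgeFinset.card → V → V → ℝ),
      Es ∈ seqE G v₁ ∧ (∀ k, 0 ≤ r k) ∧ (∑ k, r k = 1) ∧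
      (∀ k x, (νs k).1 x ≠ 0 → memVerts (Es k) x) ∧
      (∀ x, ∑ k, r k * (νs k).1 x = ν.1 x) ∧
      (∀ k, qs k ∈ TE (Es k)) ∧ (∀ k, Invariant (νs k).1 (qs k)) ∧
      c = ∑ k, ((r k : ℝ) : EReal) * relEntInt (νs k).1 (qs k) (phat G δ (Es k)) }

/-- Edges traversed along a path, given as a list of consecutively visited vertices. -/
def pathEdges : List V → Finset (Sym2 V)
  | [] => ∅
  | [_] => ∅
  | x :: y :: t => insert s(x, y) (pathEdges (y :: t))

/-- Product of one-step ORRW transition probabilities along a trajectory,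
the trajectory being listed in reverse chronological order. -/
def stepsProb (G : SimpleGraph V) [DecidableRel G.Adj] (δ : ℝ) : List V → ℝ
  | [] => 1
  | [_] => 1
  | y :: x :: t => phat G δ (pathEdges (x :: t).reverse) x y * stepsProb G δ (x :: t)

/-- The law of `(X_0, …, X_n)` for the `δ`-ORRW started at `v₁`. -/
def trajProb (G : SimpleGraph V) [DecidableRel G.Adj] (δ : ℝ) (v₁ : V) (n : ℕ)
    (f : Fin (n + 1) → V) : ℝ :=
  if f 0 = v₁ then stepsProb G δ (List.ofFn f).reverse else 0

/-- `P_{v₁}(L_{n+1} ∈ C)`: the probability that the empirical measure of the first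
`n+1` positions of the `δ`-ORRW lies in `C`. -/
def probEmp (G : SimpleGraph V) [DecidableRel G.Adj] (δ : ℝ) (v₁ : V) (n : ℕ)
    (C : Set (ProbMeas V)) : ℝ :=
  ∑ f : Fin (n + 1) → V, if empMeas n f ∈ C then trajProb G δ v₁ n f else 0

/-- The family `𝒮` of edge sets of connected subgraphs having an edge at `v₁`. -/
def scrS (G : SimpleGraph V) [DecidableRel G.Adj] (v₁ : V) : Set (Finset (Sym2 V)) :=
  {F | F ⊆ G.edgeFinset ∧ (∃ e ∈ F, v₁ ∈ e) ∧
    ∀ x y : V, memVerts F x → memVerts F y →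
      (SimpleGraph.fromEdgeSet (↑F : Set (Sym2 V))).Reachable x y}

/-- `𝒮₀` is a decreasing subset of `𝒮`. -/
def DecreasingIn (G : SimpleGraph V) [DecidableRel G.Adj] (v₁ : V)
    (S0 : Set (Finset (Sym2 V))) : Prop :=
  ∀ F₁ F₂, F₁ ∈ scrS G v₁ → F₂ ∈ scrS G v₁ → F₁ ⊆ F₂ → F₂ ∈ S0 → F₁ ∈ S0

/-- `P_{v₁}(T_{𝒮₀} > n)`. -/
def probTgt (G : SimpleGraph V) [DecidableRel G.Adj] (δ : ℝ) (v₁ : V)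
    (S0 : Set (Finset (Sym2 V))) (n : ℕ) : ℝ :=
  ∑ f : Fin (n + 1) → V,
    if ∀ k, 1 ≤ k → k ≤ n → pathEdges ((List.ofFn f).take (k + 1)) ∈ S0 then
      trajProb G δ v₁ n f
    else 0

/-- `P_{v₁}(C_E > n)` for the edge cover time `C_E`. -/
def probCgt (G : SimpleGraph V) [DecidableRel G.Adj] (δ : ℝ) (v₁ : V) (n : ℕ) : ℝ :=
  ∑ f : Fin (n + 1) → V,
    if ¬ G.edgeFinset ⊆ pathEdges (List.ofFn f) then trajProb G δ v₁ n f else 0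

/-- `E_{v₁}[exp (α T_{𝒮₀})]`, valued in `ℝ≥0∞`; the stopping time takes values in
`{1, 2, …} ∪ {∞}`. -/
def expT (G : SimpleGraph V) [DecidableRel G.Adj] (δ : ℝ) (v₁ : V)
    (S0 : Set (Finset (Sym2 V))) (α : ℝ) : ℝ≥0∞ :=
  (∑' n : ℕ, ENNReal.ofReal
      (Real.exp (α * (n + 1)) * (probTgt G δ v₁ S0 n - probTgt G δ v₁ S0 (n + 1)))) +
    (if 0 < α then (⊤ : ℝ≥0∞) else if α = 0 then 1 else 0) *
      ENNReal.ofReal (⨅ n : ℕ, probTgt G δ v₁ S0 n)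

/-- `E_{v₁}[exp (α C_E)]`, valued in `ℝ≥0∞`. -/
def expC (G : SimpleGraph V) [DecidableRel G.Adj] (δ : ℝ) (v₁ : V) (α : ℝ) : ℝ≥0∞ :=
  (∑' n : ℕ, ENNReal.ofReal
      (Real.exp (α * (n + 1)) * (probCgt G δ v₁ n - probCgt G δ v₁ (n + 1)))) +
    (if 0 < α then (⊤ : ℝ≥0∞) else if α = 0 then 1 else 0) *
      ENNReal.ofReal (⨅ n : ℕ, probCgt G δ v₁ n)

/-- The critical exponent `α_c(δ)` attached to a family `𝒮₀` of edge sets. -/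
def alphaC (G : SimpleGraph V) [DecidableRel G.Adj] (δ : ℝ)
    (S0 : Set (Finset (Sym2 V))) : EReal :=
  sInf { c : EReal | ∃ (ν : ProbMeas V) (F : Finset (Sym2 V)) (q : V → V → ℝ),
    F ∈ S0 ∧ q ∈ TE F ∧ (∀ x, ν.1 x ≠ 0 → memVerts F x) ∧ Invariant ν.1 q ∧
    c = relEntInt ν.1 q (phat G δ F) }

/-- `α_c^1(δ)`: the critical exponent for the cover time. -/
def alphaC1 (G : SimpleGraph V) [DecidableRel G.Adj] (v₁ : V) (δ : ℝ) : EReal :=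
  alphaC G δ (scrS G v₁ \ {G.edgeFinset})

end Graph

section Lifted

variable {V : Type} [Fintype V] [LinearOrder V]

/-- Smaller endpoint of an unordered pair. -/
def sym2lo (e : Sym2 V) : V := Sym2.lift ⟨fun a b => min a b, fun a b => min_comm a b⟩ e

/-- Larger endpoint of an unordered pair. -/
def sym2hi (e : Sym2 V) : V := Sym2.lift ⟨fun a b => max a b, fun a b => max_comm a b⟩ e

/-- `V_S = E × {-1, 1}`: vertex set of the lifted directed graph `S`
(`true` plays the role of `+1`). -/
abbrev VSet (G : SimpleGraph V) [DecidableRel G.Adj] : Type :=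
  {e : Sym2 V // e ∈ G.edgeFinset} × Bool

/-- Tail `z⁻` of an oriented edge. -/
def zm (G : SimpleGraph V) [DecidableRel G.Adj] (z : VSet G) : V :=
  if z.2 then sym2lo z.1.1 else sym2hi z.1.1

/-- Head `z⁺` of an oriented edge. -/
def zp (G : SimpleGraph V) [DecidableRel G.Adj] (z : VSet G) : V :=
  if z.2 then sym2hi z.1.1 else sym2lo z.1.1

/-- The kernel `p_F` on the lifted directed graph `S`. -/
def pS (G : SimpleGraph V) [DecidableRel G.Adj] (δ : ℝ) (F : Finset (Sym2 V))
    (z₁ z₂ : VSet G) : ℝ :=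
  if zp G z₁ = zm G z₂ then
    gw δ F z₂.1.1 / ∑ w : VSet G, (if zp G z₁ = zm G w then gw δ F w.1.1 else 0)
  else 0

/-- `𝒯_S`: stochastic matrices on `V_S` moving along orientations. -/
def TS (G : SimpleGraph V) [DecidableRel G.Adj] : Set (VSet G → VSet G → ℝ) :=
  {q | (∀ z w, 0 ≤ q z w) ∧ (∀ z, ∑ w, q z w = 1) ∧ ∀ z w, q z w ≠ 0 → zp G z = zm G w}

/-- `𝒞(𝒮₀)`: probability measures on `V_S` whose first marginal is supported in
some member of `𝒮₀`. -/
def CC (G : SimpleGraph V) [DecidableRel G.Adj] (S0 : Set (Finset (Sym2 V))) :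
    Set (ProbMeas (VSet G)) :=
  {μ | ∃ F ∈ S0, ∀ z : VSet G, μ.1 z ≠ 0 → z.1.1 ∈ F}

/-- `Λ_{δ,𝒮₀}`. -/
def Lam (G : SimpleGraph V) [DecidableRel G.Adj] (v₁ : V) (δ : ℝ)
    (S0 : Set (Finset (Sym2 V))) (μ : ProbMeas (VSet G)) : EReal :=
  sInf { c : EReal |
    ∃ (μs : Fin G.edgeFinset.card → ProbMeas (VSet G)) (r : Fin G.edgeFinset.card → ℝ)
      (Es : Fin G.edgeFinset.card → Finset (Sym2 V))
      (qs : Fin G.edgeFinset.card → VSet G → VSet G → ℝ),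
      Es ∈ seqE G v₁ ∧ (∀ k, 0 ≤ r k) ∧ (∀ k, Es k ∉ S0 → r k = 0) ∧ (∑ k, r k = 1) ∧
      (∀ k z, (μs k).1 z ≠ 0 → z.1.1 ∈ Es k) ∧
      (∀ z, ∑ k, r k * (μs k).1 z = μ.1 z) ∧
      (∀ k, qs k ∈ TS G) ∧ (∀ k, Invariant (μs k).1 (qs k)) ∧
      c = ∑ k, ((r k : ℝ) : EReal) * relEntInt (μs k).1 (qs k) (pS G δ (Es k)) }

/-- `Λ^z_{δ,𝒮₀}`. -/
def LamZ (G : SimpleGraph V) [DecidableRel G.Adj] (v₁ : V) (δ : ℝ)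
    (S0 : Set (Finset (Sym2 V))) (z : VSet G) (μ : ProbMeas (VSet G)) : EReal :=
  sInf { c : EReal |
    ∃ (μs : Fin G.edgeFinset.card → ProbMeas (VSet G)) (r : Fin G.edgeFinset.card → ℝ)
      (Es : Fin G.edgeFinset.card → Finset (Sym2 V))
      (qs : Fin G.edgeFinset.card → VSet G → VSet G → ℝ),
      Es ∈ seqE G v₁ ∧ (∀ k : Fin G.edgeFinset.card, (k : ℕ) = 0 → Es k = {z.1.1}) ∧
      (∀ k, 0 ≤ r k) ∧ (∀ k, Es k ∉ S0 → r k = 0) ∧ (∑ k, r k = 1) ∧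
      (∀ k w, (μs k).1 w ≠ 0 → w.1.1 ∈ Es k) ∧
      (∀ w, ∑ k, r k * (μs k).1 w = μ.1 w) ∧
      (∀ k, qs k ∈ TS G) ∧ (∀ k, Invariant (μs k).1 (qs k)) ∧
      c = ∑ k, ((r k : ℝ) : EReal) * relEntInt (μs k).1 (qs k) (pS G δ (Es k)) }

/-- `Λ₁`: the Donsker–Varadhan functional for the simple random walk on `S`
(whose kernel is `pS` with `δ = 1`). -/
def Lam1 (G : SimpleGraph V) [DecidableRel G.Adj] (μ : ProbMeas (VSet G)) : EReal :=
  sInf { c : EReal | ∃ q ∈ TS G, Invariant μ.1 q ∧ c = relEntInt μ.1 q (pS G 1 ∅) }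

/-- Boundary `∂F` of an edge set: edges of `F` adjacent to some edge outside `F`. -/
def bdry (G : SimpleGraph V) [DecidableRel G.Adj] (F : Finset (Sym2 V)) : Finset (Sym2 V) :=
  F.filter fun e => ∃ e' ∈ G.edgeFinset \ F, edgeAdj e e'

/-- Out-degree `d(z)` of `z` in `S`. -/
def outDeg (G : SimpleGraph V) [DecidableRel G.Adj] (z : VSet G) : ℕ :=
  (Finset.univ.filter (fun w : VSet G => zp G z = zm G w)).card

/-- Number `k(z)` of out-neighbours of `z` lying in `F × {-1, 1}`. -/
def outDegIn (G : SimpleGraph V) [DecidableRel G.Adj] (F : Finset (Sym2 V))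
    (z : VSet G) : ℕ :=
  (Finset.univ.filter (fun w : VSet G => zp G z = zm G w ∧ w.1.1 ∈ F)).card

/-- The law of `(Z_0, …, Z_n)` for the lifted `δ`-ORRW conditioned on `Z_0 = z`. -/
def liftTraj (G : SimpleGraph V) [DecidableRel G.Adj] (δ : ℝ) (z : VSet G) (n : ℕ)
    (g : Fin (n + 1) → VSet G) : ℝ :=
  if g 0 = z then
    ∏ i : Fin n,
      pS G δ ((Finset.Iic i.castSucc).image (fun j => (g j).1.1))
        (g i.castSucc) (g i.succ)
  else 0

/-- The restricted logarithmic Laplace functional `W^{n+1}_{𝒮₀}(z)`. -/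
def Wres (G : SimpleGraph V) [DecidableRel G.Adj] (δ : ℝ) (z : VSet G)
    (S0 : Set (Finset (Sym2 V))) (h : ProbMeas (VSet G) → ℝ) (n : ℕ) : EReal :=
  if 0 < ∑ g : Fin (n + 1) → VSet G,
      (if empMeas n g ∈ CC G S0 then liftTraj G δ z n g else 0) then
    ((-((((n : ℝ) + 1))⁻¹ * Real.log (∑ g : Fin (n + 1) → VSet G,
      if empMeas n g ∈ CC G S0 then
        Real.exp (-((n : ℝ) + 1) * h (empMeas n g)) * liftTraj G δ z n g
      else 0)) : ℝ) : EReal)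
  else (⊤ : EReal)

end Lifted

section Helpers

lemma ecoe_sum {ι : Type} (s : Finset ι) (f : ι → ℝ) :
    ((∑ i ∈ s, f i : ℝ) : EReal) = ∑ i ∈ s, ((f i : ℝ) : EReal) := by
  induction s using Finset.induction_on with
  | empty => simp
  | insert a s ha ih => rw [Finset.sum_insert ha, Finset.sum_insert ha, EReal.coe_add, ih]

variable {V : Type} [Fintype V] [DecidableEq V]

/-- Total weight at `x`. -/
def Sw (G : SimpleGraph V) [DecidableRel G.Adj] (δ : ℝ) (F : Finset (Sym2 V)) (x : V) : ℝ :=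
  ∑ z ∈ G.neighborFinset x, gw δ F s(x, z)

/-- Real valued version of `relEntInt`. -/
def Jr (G : SimpleGraph V) [DecidableRel G.Adj] (δ : ℝ) (F : Finset (Sym2 V))
    (ν : V → ℝ) (q : V → V → ℝ) : ℝ :=
  ∑ x, ν x * ∑ y, q x y * Real.log (q x y / phat G δ F x y)

lemma gw_pos {δ : ℝ} (hδ : 0 < δ) (F : Finset (Sym2 V)) (e : Sym2 V) : 0 < gw δ F e := by
  unfold gw; split_ifs <;> linarith

lemma Sw_pos (G : SimpleGraph V) [DecidableRel G.Adj] {δ : ℝ} (hδ : 0 < δ)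
    (F : Finset (Sym2 V)) {x y : V} (h : G.Adj x y) : 0 < Sw G δ F x := by
  unfold Sw
  exact Finset.sum_pos (fun z _ => gw_pos hδ _ _) ⟨y, by simpa using h⟩

lemma phat_eq (G : SimpleGraph V) [DecidableRel G.Adj] (δ : ℝ)
    (F : Finset (Sym2 V)) {x y : V} (h : G.Adj x y) (hF : s(x, y) ∈ F) :
    phat G δ F x y = δ / Sw G δ F x := by
  unfold phat Sw
  rw [if_pos h]
  simp [gw, hF]

lemma phat_pos (G : SimpleGraph V) [DecidableRel G.Adj] {δ : ℝ} (hδ : 0 < δ)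
    (F : Finset (Sym2 V)) {x y : V} (h : G.Adj x y) : 0 < phat G δ F x y := by
  unfold phat
  rw [if_pos h]
  exact div_pos (gw_pos hδ _ _) (Sw_pos G hδ F h)

lemma gw_div_le {a b : ℝ} (ha : 1 ≤ a) (hab : a < b) (F : Finset (Sym2 V)) (e : Sym2 V) :
    gw b F e / b ≤ gw a F e / a := by
  have h0 : 0 < a := by linarith
  have h1 : 0 < b := by linarith
  unfold gw
  split_ifs
  · rw [div_self h0.ne', div_self h1.ne']
  · exact one_div_le_one_div_of_le h0 hab.le

lemma Sw_div_le (G : SimpleGraph V) [DecidableRel G.Adj] {a b : ℝ} (ha : 1 ≤ a) (hab : a < b)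
    (F : Finset (Sym2 V)) (x : V) : Sw G b F x / b ≤ Sw G a F x / a := by
  unfold Sw
  rw [Finset.sum_div, Finset.sum_div]
  exact Finset.sum_le_sum fun z _ => gw_div_le ha hab F _

lemma Sw_div_lt (G : SimpleGraph V) [DecidableRel G.Adj] {a b : ℝ} (ha : 1 ≤ a) (hab : a < b)
    (F : Finset (Sym2 V)) {x z : V} (h : G.Adj x z) (hz : s(x, z) ∉ F) :
    Sw G b F x / b < Sw G a F x / a := by
  unfold Sw
  rw [Finset.sum_div, Finset.sum_div]
  refine Finset.sum_lt_sum (fun z _ => gw_div_le ha hab F _) ⟨z, by simpa using h, ?_⟩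
  simp only [gw, hz, if_false]
  exact one_div_lt_one_div_of_lt (by linarith) hab

lemma Sw_mono (G : SimpleGraph V) [DecidableRel G.Adj] {a : ℝ} (ha : 1 ≤ a)
    {F F' : Finset (Sym2 V)} (hF : F ⊆ F') (x : V) : Sw G a F x ≤ Sw G a F' x := by
  unfold Sw
  refine Finset.sum_le_sum fun z _ => ?_
  unfold gw
  split_ifs with h h'
  · exact le_rfl
  · exact absurd (hF h) h'
  · exact ha
  · exact le_rfl

lemma phat_mono (G : SimpleGraph V) [DecidableRel G.Adj] {a b : ℝ} (ha : 1 ≤ a) (hab : a < b)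
    (F : Finset (Sym2 V)) {x y : V} (h : G.Adj x y) (hF : s(x, y) ∈ F) :
    phat G a F x y ≤ phat G b F x y := by
  have h0 : 0 < a := by linarith
  have h1 : 0 < b := by linarith
  rw [phat_eq G a F h hF, phat_eq G b F h hF, ← inv_div (Sw G a F x), ← inv_div (Sw G b F x)]
  exact inv_anti₀ (div_pos (Sw_pos G h1 F h) h1) (Sw_div_le G ha hab F x)

lemma relEntInt_eq (G : SimpleGraph V) [DecidableRel G.Adj] {δ : ℝ} (hδ : 0 < δ)
    {F : Finset (Sym2 V)} (hFG : F ⊆ G.edgeFinset) (ν : V → ℝ) {q : V → V → ℝ}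
    (hq : q ∈ TE F) :
    relEntInt ν q (phat G δ F) = ((Jr G δ F ν q : ℝ) : EReal) := by
  unfold relEntInt Jr
  rw [ecoe_sum]
  refine Finset.sum_congr rfl fun x _ => ?_
  unfold relEnt
  rw [if_pos, EReal.coe_mul]
  intro y hy
  by_contra hne
  have : G.Adj x y := by simpa using hFG (hq.2.2 x y hne)
  exact (phat_pos G hδ F this).ne' hy

lemma Jr_anti (G : SimpleGraph V) [DecidableRel G.Adj] {a b : ℝ} (ha : 1 ≤ a) (hab : a < b)
    {F : Finset (Sym2 V)} (hFG : F ⊆ G.edgeFinset) {ν : V → ℝ} (hν : ∀ x, 0 ≤ ν x)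
    {q : V → V → ℝ} (hq : q ∈ TE F) : Jr G b F ν q ≤ Jr G a F ν q := by
  unfold Jr
  refine Finset.sum_le_sum fun x _ => mul_le_mul_of_nonneg_left ?_ (hν x)
  refine Finset.sum_le_sum fun y _ => ?_
  by_cases h0 : q x y = 0
  · simp [h0]
  have hF := hq.2.2 x y h0
  have hadj : G.Adj x y := by simpa using hFG hF
  have hpos : 0 < q x y := lt_of_le_of_ne (hq.1 x y) (Ne.symm h0)
  have hpa := phat_pos G (show 0 < a by linarith) F hadj
  have hpb := phat_pos G (show 0 < b by linarith) F hadj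
  refine mul_le_mul_of_nonneg_left (Real.log_le_log (div_pos hpos hpb) ?_) hpos.le
  exact div_le_div_of_nonneg_left hpos.le hpa (phat_mono G ha hab F hadj hF)

lemma total_eq (G : SimpleGraph V) [DecidableRel G.Adj] {δ : ℝ} (hδ : 0 < δ)
    {n : ℕ} (νs : Fin n → ProbMeas V) (r : Fin n → ℝ) (Es : Fin n → Finset (Sym2 V))
    (qs : Fin n → V → V → ℝ) (hE : ∀ k, Es k ⊆ G.edgeFinset) (hq : ∀ k, qs k ∈ TE (Es k)) :
    ∑ k, ((r k : ℝ) : EReal) * relEntInt (νs k).1 (qs k) (phat G δ (Es k)) =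
      ((∑ k, r k * Jr G δ (Es k) (νs k).1 (qs k) : ℝ) : EReal) := by
  rw [ecoe_sum]
  refine Finset.sum_congr rfl fun k _ => ?_
  rw [relEntInt_eq G hδ (hE k) _ (hq k), EReal.coe_mul]

lemma row_unique {q : V → V → ℝ} {x w : V} (h0 : ∀ y, 0 ≤ q x y) (h1 : ∑ y, q x y = 1)
    (hw : q x w = 1) {y : V} (hy : y ≠ w) : q x y = 0 := by
  have h := Finset.add_sum_erase Finset.univ (q x) (Finset.mem_univ w)
  rw [h1, hw] at h
  have h2 : ∑ y ∈ Finset.univ.erase w, q x y = 0 := by linarith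
  exact (Finset.sum_eq_zero_iff_of_nonneg (fun y _ => h0 y)).1 h2 y (by simp [hy])

lemma row_ent (G : SimpleGraph V) [DecidableRel G.Adj] (δ : ℝ)
    {F : Finset (Sym2 V)} {q : V → V → ℝ} {x w : V} (hadj : G.Adj x w) (hF : s(x, w) ∈ F)
    (h0 : ∀ y, y ≠ w → q x y = 0) (hw : q x w = 1) :
    ∑ y, q x y * Real.log (q x y / phat G δ F x y) = Real.log (Sw G δ F x / δ) := by
  rw [Finset.sum_eq_single w]
  · rw [hw, phat_eq G δ F hadj hF]; simp
  · intro y _ hy; simp [h0 y hy]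
  · simp

lemma Jr_edge (G : SimpleGraph V) [DecidableRel G.Adj] (δ : ℝ)
    {F : Finset (Sym2 V)} {ν : V → ℝ} {q : V → V → ℝ} {v w : V} (hadj : G.Adj v w)
    (hF : s(v, w) ∈ F) (hq : q ∈ TE F)
    (hv : ν v = 1 / 2) (hw : ν w = 1 / 2) (hν : ∀ x, x ≠ v → x ≠ w → ν x = 0)
    (hvw : q v w = 1) (hwv : q w v = 1) :
    Jr G δ F ν q = 1 / 2 * Real.log (Sw G δ F v / δ) + 1 / 2 * Real.log (Sw G δ F w / δ) := by
  have hF' : s(w, v) ∈ F := by rwa [Sym2.eq_swap]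
  have hne : v ≠ w := hadj.ne
  unfold Jr
  rw [Finset.sum_eq_add v w hne]
  · rw [hv, hw, row_ent G δ hadj hF _ hvw, row_ent G δ hadj.symm hF' _ hwv]
    · intro y hy
      exact row_unique (hq.1 w) (hq.2.1 w ⟨_, hF, by simp⟩) hwv hy
    · intro y hy
      exact row_unique (hq.1 v) (hq.2.1 v ⟨_, hF, by simp⟩) hvw hy
  · rintro x _ ⟨h1, h2⟩; simp [hν x h1 h2]
  · simp
  · simp

lemma forced (G : SimpleGraph V) [DecidableRel G.Adj]
    {F : Finset (Sym2 V)} (hFG : F ⊆ G.edgeFinset) (ν : ProbMeas V) {q : V → V → ℝ} {v w : V}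
    (hne : v ≠ w) (hq : q ∈ TE F) (hsup : ∀ x, ν.1 x ≠ 0 → memVerts F x)
    (hinv : Invariant ν.1 q) (hν : ∀ x, x ≠ v → x ≠ w → ν.1 x = 0) :
    ν.1 v = 1 / 2 ∧ ν.1 w = 1 / 2 ∧ q v w = 1 ∧ q w v = 1 ∧ s(v, w) ∈ F := by
  have hdiag : ∀ x, q x x = 0 := by
    intro x
    by_contra h
    have : G.Adj x x := by simpa using hFG (hq.2.2 x x h)
    exact G.loopless.irrefl x this
  have hle : ∀ x y, memVerts F x → q x y ≤ 1 := by
    intro x y hx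
    rw [← hq.2.1 x hx]
    exact Finset.single_le_sum (fun z _ => hq.1 x z) (Finset.mem_univ y)
  have two : ∀ f : V → ℝ, (∀ x, x ≠ v → x ≠ w → f x = 0) → ∑ x, f x = f v + f w := by
    intro f hf
    rw [Finset.sum_eq_add v w hne]
    · rintro x _ ⟨h1, h2⟩; exact hf x h1 h2
    · simp
    · simp
  have hsum := ν.2.2
  rw [two _ hν] at hsum
  have e1 := hinv v
  have e2 := hinv w
  rw [two _ (fun x h1 h2 => by rw [hν x h1 h2, zero_mul]), hdiag] at e1 e2
  have hv0 := ν.2.1 v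
  have hw0 := ν.2.1 w
  have hv : ν.1 v ≠ 0 := by
    intro h
    rw [h] at e2 hsum
    linarith
  have hw : ν.1 w ≠ 0 := by
    intro h
    rw [h] at e1 hsum
    linarith
  have l1 := hle v w (hsup v hv)
  have l2 := hle w v (hsup w hw)
  have hv' : 0 < ν.1 v := lt_of_le_of_ne hv0 (Ne.symm hv)
  have hw' : 0 < ν.1 w := lt_of_le_of_ne hw0 (Ne.symm hw)
  have i1 : ν.1 v ≤ ν.1 w := by nlinarith
  have i2 : ν.1 w ≤ ν.1 v := by nlinarith
  have hvh : ν.1 v = 1 / 2 := by linarith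
  have hwh : ν.1 w = 1 / 2 := by linarith
  rw [hvh, hwh] at e1 e2
  have q1 : q v w = 1 := by linarith
  have q2 : q w v = 1 := by linarith
  exact ⟨hvh, hwh, q1, q2, hq.2.2 v w (by rw [q1]; norm_num)⟩

lemma exists_next (G : SimpleGraph V) [DecidableRel G.Adj] (hG : G.Connected)
    {F : Finset (Sym2 V)} (hne : F.Nonempty) (hFG : F ⊂ G.edgeFinset) :
    ∃ e ∈ G.edgeFinset, e ∉ F ∧ ∃ e' ∈ F, edgeAdj e e' := by
  by_contra hcon
  push Not at hcon
  have hcl : ∀ x y, G.Adj x y → memVerts F x → s(x, y) ∈ F := by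
    rintro x y h ⟨e', he', hx⟩
    by_contra hn
    exact hcon s(x, y) (by simpa using h) hn e' he' ⟨x, by simp, hx⟩
  obtain ⟨e, he⟩ := hne
  obtain ⟨a, ha⟩ : ∃ a, memVerts F a := by
    induction e using Sym2.ind with
    | _ x y => exact ⟨x, _, he, by simp⟩
  have hall : ∀ b, memVerts F b := by
    intro b
    obtain ⟨p⟩ := hG.preconnected a b
    induction p with
    | nil => exact ha
    | cons h p ih => exact ih ⟨_, hcl _ _ h ha, by simp⟩
  refine hFG.2 fun f hf => ?_
  induction f using Sym2.ind with
  | _ x y => exact hcl x y (by simpa using hf) (hall x)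

/-- Adds one adjacent edge, when possible. -/
def nextE (G : SimpleGraph V) [DecidableRel G.Adj] (F : Finset (Sym2 V)) : Finset (Sym2 V) :=
  if h : ∃ e ∈ G.edgeFinset, e ∉ F ∧ ∃ e' ∈ F, edgeAdj e e' then insert h.choose F else F

lemma nextE_spec (G : SimpleGraph V) [DecidableRel G.Adj] (hG : G.Connected)
    {F : Finset (Sym2 V)} (hne : F.Nonempty) (hFG : F ⊂ G.edgeFinset) :
    nextE G F ⊆ G.edgeFinset ∧ (nextE G F).card = F.card + 1 ∧ F ⊂ nextE G F ∧
      ∀ e ∈ nextE G F \ F, ∃ e' ∈ F, edgeAdj e e' := by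
  have h := exists_next G hG hne hFG
  obtain ⟨h1, h2, h3⟩ := h.choose_spec
  have heq : nextE G F = insert h.choose F := by unfold nextE; rw [dif_pos h]
  rw [heq]
  refine ⟨Finset.insert_subset h1 hFG.1, Finset.card_insert_of_notMem h2,
    Finset.ssubset_insert h2, ?_⟩
  intro e he
  simp only [Finset.mem_sdiff, Finset.mem_insert] at he
  rcases he with ⟨he | he, hn⟩
  · rw [he]; exact h3
  · exact absurd he hn

lemma iter_spec (G : SimpleGraph V) [DecidableRel G.Adj] (hG : G.Connected)
    {e : Sym2 V} (he : e ∈ G.edgeFinset) (k : ℕ) (hk : k < G.edgeFinset.card) :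
    (nextE G)^[k] {e} ⊆ G.edgeFinset ∧ ((nextE G)^[k] {e}).card = k + 1 := by
  induction k with
  | zero => simpa using he
  | succ k ih =>
    obtain ⟨h1, h2⟩ := ih (by omega)
    rw [Function.iterate_succ_apply']
    have := nextE_spec G hG (F := (nextE G)^[k] {e}) (Finset.card_pos.1 (by omega))
      (Finset.ssubset_iff_subset_ne.2 ⟨h1, fun h => by rw [h] at h2; omega⟩)
    exact ⟨this.1, by rw [this.2.1, h2]⟩

lemma seq_exists (G : SimpleGraph V) [DecidableRel G.Adj] (hG : G.Connected) (v₁ : V)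
    {e : Sym2 V} (he : e ∈ G.edgeFinset) (hv : v₁ ∈ e) :
    (fun k : Fin G.edgeFinset.card => (nextE G)^[(k : ℕ)] {e}) ∈ seqE G v₁ := by
  have step : ∀ k l : Fin G.edgeFinset.card, (k : ℕ) + 1 = (l : ℕ) → 
      (nextE G)^[(k : ℕ)] {e} ⊂ (nextE G)^[(l : ℕ)] {e} ∧
      ∀ f ∈ (nextE G)^[(l : ℕ)] {e} \ (nextE G)^[(k : ℕ)] {e},
        ∃ e' ∈ (nextE G)^[(k : ℕ)] {e}, edgeAdj f e' := by
    intro k l hkl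
    obtain ⟨h1, h2⟩ := iter_spec G hG he k k.2
    rw [← hkl, Function.iterate_succ_apply']
    have hl := l.2
    have := nextE_spec G hG (F := (nextE G)^[(k : ℕ)] {e}) (Finset.card_pos.1 (by omega))
      (Finset.ssubset_iff_subset_ne.2 ⟨h1, fun h => by rw [h] at h2; omega⟩)
    exact this.2.2
  refine ⟨fun k => (iter_spec G hG he k k.2).1, fun k => (iter_spec G hG he k k.2).2,
    fun k l h => (step k l h).1, ?_, fun k l h => (step k l h).2⟩
  intro k hk
  refine ⟨e, ?_, hv⟩
  simp [hk]

/-- Uniform measure on the endpoints of an edge. -/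
def muEdge (v w : V) (hne : v ≠ w) : ProbMeas V :=
  ⟨fun x => if x = v ∨ x = w then 1 / 2 else 0, fun x => by positivity, by
    rw [Finset.sum_eq_add v w hne]
    · simp; norm_num
    · rintro x _ ⟨h1, h2⟩; simp [h1, h2]
    · simp
    · simp⟩

/-- Successor map for the back and forth kernel. -/
def nxtV (v w : V) (F : Finset (Sym2 V)) (x : V) : V :=
  if x = v then w else if x = w then v else
    if h : ∃ y, s(x, y) ∈ F then h.choose else x

/-- Back and forth kernel. -/
def qEdge (v w : V) (F : Finset (Sym2 V)) (x y : V) : ℝ :=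
  if memVerts F x ∧ y = nxtV v w F x then 1 else 0

lemma nxtV_mem {v w : V} {F : Finset (Sym2 V)} (he : s(v, w) ∈ F) {x : V}
    (hx : memVerts F x) : s(x, nxtV v w F x) ∈ F := by
  unfold nxtV
  split_ifs with h1 h2 h3
  · rwa [h1]
  · rw [h2, Sym2.eq_swap]; exact he
  · exact h3.choose_spec
  · exfalso
    obtain ⟨e, heF, hxe⟩ := hx
    obtain ⟨y, rfl⟩ := Sym2.mem_iff_exists.1 hxe
    exact h3 ⟨y, heF⟩

lemma qEdge_mem {v w : V} {F : Finset (Sym2 V)} (he : s(v, w) ∈ F) : qEdge v w F ∈ TE F := by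
  refine ⟨fun x y => by unfold qEdge; positivity, fun x hx => by simp [qEdge, hx], ?_⟩
  intro x y h
  unfold qEdge at h
  have h' : memVerts F x ∧ y = nxtV v w F x := by
    by_contra hn; rw [if_neg hn] at h; exact h rfl
  rw [h'.2]; exact nxtV_mem he h'.1

lemma qEdge_vw {v w : V} {F : Finset (Sym2 V)} (he : s(v, w) ∈ F) : qEdge v w F v w = 1 := by
  unfold qEdge
  rw [if_pos]
  exact ⟨⟨_, he, by simp⟩, by simp [nxtV]⟩

lemma qEdge_wv {v w : V} (hne : v ≠ w) {F : Finset (Sym2 V)} (he : s(v, w) ∈ F) :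
    qEdge v w F w v = 1 := by
  unfold qEdge
  rw [if_pos]
  exact ⟨⟨_, he, by simp⟩, by simp [nxtV, hne.symm]⟩

lemma qEdge_inv {v w : V} (hne : v ≠ w) {F : Finset (Sym2 V)} (he : s(v, w) ∈ F) :
    Invariant (muEdge v w hne).1 (qEdge v w F) := by
  intro y
  have hv : memVerts F v := ⟨_, he, by simp⟩
  have hw : memVerts F w := ⟨_, he, by simp⟩
  rw [Finset.sum_eq_add v w hne]
  · by_cases h1 : y = v
    · subst h1; simp [muEdge, qEdge, nxtV, hne, hne.symm, hv, hw]
    · by_cases h2 : y = w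
      · subst h2; simp [muEdge, qEdge, nxtV, hne, hne.symm, hv, hw]
      · simp [muEdge, qEdge, nxtV, hne.symm, hv, hw, h1, h2]
  · rintro x _ ⟨h1, h2⟩; simp [muEdge, h1, h2]
  · simp
  · simp

lemma iter_edge_mem (G : SimpleGraph V) [DecidableRel G.Adj] (e : Sym2 V) (k : ℕ) :
    e ∈ (nextE G)^[k] {e} := by
  induction k with
  | zero => simp
  | succ k ih =>
    rw [Function.iterate_succ_apply']
    unfold nextE
    split_ifs
    · exact Finset.mem_insert_of_mem ih
    · exact ih

/-- The value of the rate function at the edge measure. -/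
def Lval (G : SimpleGraph V) [DecidableRel G.Adj] (δ : ℝ) (v w : V) : ℝ :=
  1 / 2 * Real.log (Sw G δ {s(v, w)} v / δ) + 1 / 2 * Real.log (Sw G δ {s(v, w)} w / δ)

lemma muEdge_off {v w : V} (hne : v ≠ w) (x : V) (h1 : x ≠ v) (h2 : x ≠ w) :
    (muEdge v w hne).1 x = 0 := by simp [muEdge, h1, h2]

lemma upper (G : SimpleGraph V) [DecidableRel G.Adj] (hG : G.Connected) {δ : ℝ} (hδ : 0 < δ)
    {v w : V} (hadj : G.Adj v w) :
    Ifun G v δ (muEdge v w hadj.ne) ≤ ((Lval G δ v w : ℝ) : EReal) := by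
  have he : s(v, w) ∈ G.edgeFinset := by simpa using hadj
  have hcard : 0 < G.edgeFinset.card := Finset.card_pos.2 ⟨_, he⟩
  have hseq := seq_exists G hG v he (by simp)
  have hm := fun k => iter_edge_mem G s(v, w) k
  unfold Ifun
  refine sInf_le ⟨fun _ => muEdge v w hadj.ne, fun k => if k = ⟨0, hcard⟩ then 1 else 0,
    _, fun k => qEdge v w ((nextE G)^[(k : ℕ)] {s(v, w)}), hseq, ?_, ?_, ?_, ?_, ?_, ?_, ?_⟩
  · intro k; positivity
  · simp
  · intro k x hx
    by_cases h1 : x = v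
    · exact ⟨_, hm k, by simp [h1]⟩
    · by_cases h2 : x = w
      · exact ⟨_, hm k, by simp [h2]⟩
      · exact absurd (muEdge_off _ x h1 h2) hx
  · intro x; simp
  · intro k; exact qEdge_mem (hm k)
  · intro k; exact qEdge_inv _ (hm k)
  · rw [total_eq G hδ (fun _ => muEdge v w hadj.ne) _ _ _ hseq.1 (fun k => qEdge_mem (hm k))]
    congr 1
    rw [Finset.sum_eq_single ⟨0, hcard⟩]
    · simp only [if_true, one_mul]
      rw [Jr_edge G δ hadj (hm 0) (qEdge_mem (hm 0)) (by simp [muEdge]) (by simp [muEdge])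
        (muEdge_off _) (qEdge_vw (hm 0)) (qEdge_wv hadj.ne (hm 0))]
      rfl
    · intro k _ hk; simp [hk]
    · simp

lemma lower (G : SimpleGraph V) [DecidableRel G.Adj] {δ : ℝ} (hδ : 1 ≤ δ)
    {v w : V} (hadj : G.Adj v w) :
    ((Lval G δ v w : ℝ) : EReal) ≤ Ifun G v δ (muEdge v w hadj.ne) := by
  have h0 : 0 < δ := by linarith
  unfold Ifun
  refine le_sInf ?_
  rintro c ⟨νs, r, Es, qs, hE, hr, hr1, hsup, hmix, hq, hinv, rfl⟩
  rw [total_eq G h0 νs r Es qs hE.1 hq, EReal.coe_le_coe_iff]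
  have key : ∀ k, r k * Lval G δ v w ≤ r k * Jr G δ (Es k) (νs k).1 (qs k) := by
    intro k
    rcases (hr k).eq_or_lt with h | h
    · simp [← h]
    refine mul_le_mul_of_nonneg_left ?_ h.le
    have hν : ∀ x, x ≠ v → x ≠ w → (νs k).1 x = 0 := by
      intro x h1 h2
      have hx := hmix x
      rw [muEdge_off _ x h1 h2] at hx
      have := (Finset.sum_eq_zero_iff_of_nonneg
        (fun j _ => mul_nonneg (hr j) ((νs j).2.1 x))).1 hx k (Finset.mem_univ k)
      exact (mul_eq_zero.1 this).resolve_left h.ne'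
    obtain ⟨a1, a2, a3, a4, a5⟩ :=
      forced G (hE.1 k) (νs k) hadj.ne (hq k) (hsup k) (hinv k) hν
    rw [Jr_edge G δ hadj a5 (hq k) a1 a2 hν a3 a4]
    unfold Lval
    have hs : ({s(v, w)} : Finset (Sym2 V)) ⊆ Es k := by simpa using a5
    have b1 := Real.log_le_log (div_pos (Sw_pos G h0 _ hadj) h0)
      (div_le_div_of_nonneg_right (Sw_mono G hδ hs v) h0.le)
    have b2 := Real.log_le_log (div_pos (Sw_pos G h0 _ hadj.symm) h0)
      (div_le_div_of_nonneg_right (Sw_mono G hδ hs w) h0.le)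
    linarith
  calc Lval G δ v w = ∑ k, r k * Lval G δ v w := by rw [← Finset.sum_mul, hr1, one_mul]
    _ ≤ _ := Finset.sum_le_sum fun k _ => key k

lemma exists_third (G : SimpleGraph V) [DecidableRel G.Adj] (hG : G.Connected)
    (hV : 3 ≤ Fintype.card V) {v w : V} :
    (∃ z, G.Adj v z ∧ z ≠ w) ∨ (∃ z, G.Adj w z ∧ z ≠ v) := by
  by_contra hcon
  push Not at hcon
  obtain ⟨h1, h2⟩ := hcon
  have hall : ∀ (a b : V), G.Reachable a b → (a = v ∨ a = w) → (b = v ∨ b = w) := by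
    rintro a b ⟨p⟩
    induction p with
    | nil => exact id
    | cons h p ih =>
      intro ha
      apply ih
      rcases ha with rfl | rfl
      · exact Or.inr (h1 _ h)
      · exact Or.inl (h2 _ h)
  have hsub : (Finset.univ : Finset V) ⊆ {v, w} := by
    intro b _
    simpa using hall v b (hG.preconnected v b) (Or.inl rfl)
  have := Finset.card_le_card hsub
  have h3 := Finset.card_le_two (a := v) (b := w)
  rw [Finset.card_univ] at this
  omega

lemma Lval_lt (G : SimpleGraph V) [DecidableRel G.Adj] (hG : G.Connected)
    (hV : 3 ≤ Fintype.card V) {a b : ℝ} (ha : 1 ≤ a) (hab : a < b) {v w : V}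
    (hadj : G.Adj v w) : Lval G b v w < Lval G a v w := by
  have h1 : 0 < b := by linarith
  have pv := div_pos (Sw_pos G h1 {s(v, w)} hadj) h1
  have pw := div_pos (Sw_pos G h1 {s(v, w)} hadj.symm) h1
  have lv := Real.log_le_log pv (Sw_div_le G ha hab _ v)
  have lw := Real.log_le_log pw (Sw_div_le G ha hab _ w)
  unfold Lval
  rcases exists_third G hG hV (v := v) (w := w) with ⟨z, hz, hne⟩ | ⟨z, hz, hne⟩
  · have := Real.log_lt_log pv (Sw_div_lt G ha hab {s(v, w)} hz (by
      simp only [Finset.mem_singleton, Sym2.eq_iff, not_or, not_and]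
      exact ⟨fun _ => hne, fun h => absurd h hadj.ne⟩))
    linarith
  · have := Real.log_lt_log pw (Sw_div_lt G ha hab {s(v, w)} hz (by
      simp only [Finset.mem_singleton, Sym2.eq_iff, not_or, not_and]
      exact ⟨fun h => absurd h.symm hadj.ne, fun _ => hne⟩))
    linarith

end Helpers

/-- For `1 ≤ δ₁ < δ₂`: `I_{δ₁} ≥ I_{δ₂}` pointwise and strictly at
some `μ₀`. -/
theorem orrw_rate_antitone {V : Type} [Fintype V] [DecidableEq V]
    (G : SimpleGraph V) [DecidableRel G.Adj] (hG : G.Connected)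
    (hV : 3 ≤ Fintype.card V) (v₁ : V) (δ₁ δ₂ : ℝ) (h1 : 1 ≤ δ₁) (h12 : δ₁ < δ₂) :
    (∀ μ : ProbMeas V, Ifun G v₁ δ₂ μ ≤ Ifun G v₁ δ₁ μ) ∧
    (∃ μ₀ : ProbMeas V, Ifun G v₁ δ₂ μ₀ < Ifun G v₁ δ₁ μ₀) := by
  constructor
  · intro μ
    refine le_sInf ?_
    rintro c ⟨νs, r, Es, qs, hE, hr, hr1, hsup, hmix, hq, hinv, rfl⟩
    refine le_trans (sInf_le ⟨νs, r, Es, qs, hE, hr, hr1, hsup, hmix, hq, hinv, rfl⟩) ?_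
    rw [total_eq G (by linarith) νs r Es qs hE.1 hq, total_eq G (by linarith) νs r Es qs hE.1 hq,
      EReal.coe_le_coe_iff]
    exact Finset.sum_le_sum fun k _ => mul_le_mul_of_nonneg_left
      (Jr_anti G h1 h12 (hE.1 k) (νs k).2.1 (hq k)) (hr k)
  · have : Nontrivial V := Fintype.one_lt_card_iff_nontrivial.1 (by omega)
    obtain ⟨w, hw⟩ := hG.preconnected.exists_adj_of_nontrivial v₁
    refine ⟨muEdge v₁ w hw.ne, ?_⟩
    calc _ ≤ ((Lval G δ₂ v₁ w : ℝ) : EReal) := upper G hG (by linarith) hw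
      _ < ((Lval G δ₁ v₁ w : ℝ) : EReal) := EReal.coe_lt_coe_iff.2 (Lval_lt G hG hV h1 h12 hw)
      _ ≤ _ := lower G h1 hw

end ORRW
end
end

section
/- There exists μ∈𝒫(V) such that the function (0,∞)∋δ ↦ I_δ(μ) is not differentiable at δ=1. -/
open scoped BigOperators Classical ENNReal
open Filter Topology

noncomputable section
namespace ORRW

section Aux

variable {V : Type} [Fintype V] [DecidableEq V]

def Ssum (G : SimpleGraph V) [DecidableRel G.Adj] (δ : ℝ) (F : Finset (Sym2 V)) (x : V) : ℝ :=
  ∑ z ∈ G.neighborFinset x, gw δ F s(x, z)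

lemma closed_all (G : SimpleGraph V) (hG : G.Connected) (P : V → Prop) (x : V) (hx : P x)
    (hP : ∀ a b, P a → G.Adj a b → P b) (y : V) : P y := by
  have h := (SimpleGraph.reachable_iff_reflTransGen x y).1 (hG.preconnected x y)
  induction h with
  | refl => exact hx
  | tail _ hab ih => exact hP _ _ ih hab

lemma Ssum_pos (G : SimpleGraph V) [DecidableRel G.Adj] {δ : ℝ} (hδ : 0 < δ)
    (F : Finset (Sym2 V)) {x y : V} (h : G.Adj x y) : 0 < Ssum G δ F x := by
  unfold Ssum
  exact Finset.sum_pos (fun z _ => gw_pos hδ _ _) ⟨y, by simpa using h⟩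

lemma Ssum_ge_low (G : SimpleGraph V) [DecidableRel G.Adj] {δ : ℝ} (hδ : δ ≤ 1)
    (F : Finset (Sym2 V)) (x : V) : G.degree x * δ ≤ Ssum G δ F x := by
  unfold Ssum
  rw [← SimpleGraph.card_neighborFinset_eq_degree, ← nsmul_eq_mul]
  apply Finset.card_nsmul_le_sum
  intro z _
  unfold gw; split_ifs <;> linarith

lemma Ssum_ge_high (G : SimpleGraph V) [DecidableRel G.Adj] {δ : ℝ} (hδ : 1 ≤ δ)
    (F : Finset (Sym2 V)) {x y : V} (h : G.Adj x y) (hF : s(x, y) ∈ F) :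
    δ + (G.degree x - 1) ≤ Ssum G δ F x := by
  unfold Ssum
  have hy : y ∈ G.neighborFinset x := by simpa using h
  rw [← Finset.add_sum_erase _ _ hy]
  have h1 : gw δ F s(x, y) = δ := by simp [gw, hF]
  have h2 : ((G.neighborFinset x).erase y).card • (1 : ℝ) ≤
      ∑ z ∈ (G.neighborFinset x).erase y, gw δ F s(x, z) := by
    apply Finset.card_nsmul_le_sum
    intro z _
    unfold gw; split_ifs <;> linarith
  have h3 : (((G.neighborFinset x).erase y).card : ℝ) = G.degree x - 1 := by
    rw [← SimpleGraph.card_neighborFinset_eq_degree, ← Finset.card_erase_add_one hy]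
    push_cast; ring
  rw [nsmul_eq_mul, h3] at h2
  linarith

lemma Ssum_full (G : SimpleGraph V) [DecidableRel G.Adj] (δ : ℝ) (x : V) :
    Ssum G δ G.edgeFinset x = G.degree x * δ := by
  unfold Ssum
  rw [← SimpleGraph.card_neighborFinset_eq_degree, ← nsmul_eq_mul]
  apply Finset.sum_eq_card_nsmul
  intro z hz
  have : G.Adj x z := by simpa using hz
  simp [gw, this]

lemma Ssum_single (G : SimpleGraph V) [DecidableRel G.Adj] (δ : ℝ) {x y : V} (h : G.Adj x y) :
    Ssum G δ {s(x, y)} x = δ + (G.degree x - 1) := by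
  unfold Ssum
  have hy : y ∈ G.neighborFinset x := by simpa using h
  rw [← Finset.add_sum_erase _ _ hy]
  have h1 : gw δ {s(x, y)} s(x, y) = δ := by simp [gw]
  have h2 : ∑ z ∈ (G.neighborFinset x).erase y, gw δ {s(x, y)} s(x, z) =
      ((G.neighborFinset x).erase y).card • (1 : ℝ) := by
    apply Finset.sum_eq_card_nsmul
    intro z hz
    have hzy : z ≠ y := (Finset.mem_erase.1 hz).1
    have : s(x, z) ≠ s(x, y) := by
      intro h'
      exact hzy (Sym2.congr_right.1 h')
    simp only [gw, Finset.mem_singleton, this, if_false]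
  have h3 : (((G.neighborFinset x).erase y).card : ℝ) = G.degree x - 1 := by
    rw [← SimpleGraph.card_neighborFinset_eq_degree, ← Finset.card_erase_add_one hy]
    push_cast; ring
  rw [h1, h2, nsmul_eq_mul, h3]
  ring

def hcost (G : SimpleGraph V) [DecidableRel G.Adj] (v u : V) (δ : ℝ) (F : Finset (Sym2 V)) : ℝ :=
  (Real.log (Ssum G δ F v / δ) + Real.log (Ssum G δ F u / δ)) / 2

lemma relEnt_point (G : SimpleGraph V) [DecidableRel G.Adj] {v u : V} (hvu : G.Adj v u)
    {δ : ℝ} (hδ : 0 < δ) (F : Finset (Sym2 V)) (he : s(v, u) ∈ F) (q : V → ℝ)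
    (hq1 : q u = 1) (hq0 : ∀ y, y ≠ u → q y = 0) :
    relEnt q (phat G δ F v) = ((Real.log (Ssum G δ F v / δ) : ℝ) : EReal) := by
  have hS := Ssum_pos G hδ F hvu
  have hp : phat G δ F v u = δ / Ssum G δ F v := by
    simp [phat, hvu, Ssum, gw, he]
  unfold relEnt
  rw [if_pos]
  · congr 1
    rw [Finset.sum_eq_single u]
    · rw [hq1, hp]; simp
    · intro b _ hb; simp [hq0 b hb]
    · simp
  · intro a ha
    by_cases hau : a = u
    · subst hau
      rw [hp] at ha
      have : 0 < δ / Ssum G δ F v := by positivity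
      linarith
    · exact hq0 a hau

lemma row_zero (q : V → ℝ) (h0 : ∀ y, 0 ≤ q y) (hs : ∑ y, q y = 1) (u : V) (hu : q u = 1) :
    ∀ y, y ≠ u → q y = 0 := by
  intro y hy
  rw [← Finset.add_sum_erase _ _ (Finset.mem_univ u), hu] at hs
  have : ∑ x ∈ Finset.univ.erase u, q x = 0 := by linarith
  exact (Finset.sum_eq_zero_iff_of_nonneg (fun i _ => h0 i)).1 this y (by simp [hy])

lemma key (G : SimpleGraph V) [DecidableRel G.Adj] {v u : V} (hvu : G.Adj v u)
    {δ : ℝ} (hδ : 0 < δ) (F : Finset (Sym2 V)) (hF : F ⊆ G.edgeFinset) (ν : ProbMeas V)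
    (hsupp : ∀ x, x ≠ v ∧ x ≠ u → ν.1 x = 0) (hV : ∀ x, ν.1 x ≠ 0 → memVerts F x)
    (q : V → V → ℝ) (hq : q ∈ TE F) (hinv : Invariant ν.1 q) :
    s(v, u) ∈ F ∧ relEntInt ν.1 q (phat G δ F) = ((hcost G v u δ F : ℝ) : EReal) := by
  obtain ⟨q0, q1, qF⟩ := hq
  have hne : v ≠ u := hvu.ne
  have hloop : ∀ x, q x x = 0 := by
    intro x
    by_contra h
    have := hF (qF x x h)
    simp at this
  have hI : ∀ y, ν.1 v * q v y + ν.1 u * q u y = ν.1 y := by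
    intro y
    rw [← hinv y, Fintype.sum_eq_add v u hne]
    intro x hx
    simp [hsupp x hx]
  have hsum : ν.1 v + ν.1 u = 1 := by
    have h := ν.2.2
    rw [Fintype.sum_eq_add v u hne (fun x hx => hsupp x hx)] at h
    exact h
  have e1 := hI v
  have e2 := hI u
  rw [hloop] at e1 e2
  have n1 := ν.2.1 v
  have n2 := ν.2.1 u
  have hnv : ν.1 v ≠ 0 := by
    intro h; rw [h] at e2 hsum; simp at e2; linarith
  have hnu : ν.1 u ≠ 0 := by
    intro h; rw [h] at e1 hsum; simp at e1; exact hnv e1.symm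
  have sv := q1 v (hV v hnv)
  have su := q1 u (hV u hnu)
  have lv : q v u ≤ 1 := by
    rw [← sv]; exact Finset.single_le_sum (fun i _ => q0 v i) (Finset.mem_univ u)
  have lu : q u v ≤ 1 := by
    rw [← su]; exact Finset.single_le_sum (fun i _ => q0 u i) (Finset.mem_univ v)
  have hh : ν.1 v = 1/2 := by nlinarith
  have hh' : ν.1 u = 1/2 := by linarith
  rw [hh, hh'] at e1 e2
  have qv : q v u = 1 := by linarith
  have qu : q u v = 1 := by linarith
  have he : s(v, u) ∈ F := qF v u (by rw [qv]; norm_num)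
  refine ⟨he, ?_⟩
  unfold relEntInt
  rw [Fintype.sum_eq_add v u hne]
  · rw [relEnt_point G hvu hδ F he _ qv (row_zero _ (q0 v) sv u qv),
      relEnt_point G hvu.symm hδ F (by rwa [Sym2.eq_swap]) _ qu (row_zero _ (q0 u) su v qu),
      hh, hh', ← EReal.coe_mul, ← EReal.coe_mul, ← EReal.coe_add]
    congr 1
    unfold hcost; ring
  · intro x hx
    simp [hsupp x hx]

lemma extend (G : SimpleGraph V) [DecidableRel G.Adj] (hG : G.Connected)
    (F : Finset (Sym2 V)) (e : Sym2 V) (he : e ∈ F) (hF : F ⊆ G.edgeFinset)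
    (hne : F ≠ G.edgeFinset) :
    ∃ F' : Finset (Sym2 V), F ⊂ F' ∧ F' ⊆ G.edgeFinset ∧ F'.card = F.card + 1 ∧
      ∀ e' ∈ F' \ F, ∃ e'' ∈ F, edgeAdj e' e'' := by
  have : ∃ e' ∈ G.edgeFinset, e' ∉ F ∧ ∃ e'' ∈ F, edgeAdj e' e'' := by
    by_contra hcon
    push Not at hcon
    have hall : ∀ y, memVerts F y := by
      induction e with | _ a b =>
      apply closed_all G hG (memVerts F) a ⟨_, he, by simp⟩
      rintro x y ⟨f, hf, hxf⟩ hxy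
      by_cases hm : s(x, y) ∈ F
      · exact ⟨_, hm, by simp⟩
      · exact absurd ⟨x, by simp, hxf⟩ (hcon s(x, y) (by simpa using hxy) hm f hf)
    obtain ⟨e', h1, h2⟩ := Finset.exists_of_ssubset (Finset.ssubset_iff_subset_ne.2 ⟨hF, hne⟩)
    induction e' with | _ a b =>
    obtain ⟨f, hf, haf⟩ := hall a
    exact hcon _ h1 h2 f hf ⟨a, by simp, haf⟩
  obtain ⟨e', h1, h2, h3⟩ := this
  refine ⟨insert e' F, Finset.ssubset_insert h2, ?_, Finset.card_insert_of_notMem h2, ?_⟩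
  · intro x hx
    rcases Finset.mem_insert.1 hx with rfl | h
    · exact h1
    · exact hF h
  · intro x hx
    simp only [Finset.mem_sdiff, Finset.mem_insert] at hx
    rcases hx with ⟨rfl | h, h'⟩
    · exact h3
    · exact absurd h h'

lemma exists_seq (G : SimpleGraph V) [DecidableRel G.Adj] (hG : G.Connected) {v u : V}
    (hvu : G.Adj v u) :
    ∃ Es ∈ seqE G v, (∀ k, s(v, u) ∈ Es k) ∧ (∀ k : Fin G.edgeFinset.card, (k : ℕ) = 0 → Es k = {s(v, u)}) := by
  have hst : ∀ F : Finset (Sym2 V), ∃ F' : Finset (Sym2 V), s(v, u) ∈ F → F ⊆ G.edgeFinset →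
      F ≠ G.edgeFinset → F ⊂ F' ∧ F' ⊆ G.edgeFinset ∧ F'.card = F.card + 1 ∧
      ∀ e' ∈ F' \ F, ∃ e'' ∈ F, edgeAdj e' e'' := by
    intro F
    by_cases h : s(v, u) ∈ F ∧ F ⊆ G.edgeFinset ∧ F ≠ G.edgeFinset
    · obtain ⟨F', hF'⟩ := extend G hG F _ h.1 h.2.1 h.2.2
      exact ⟨F', fun _ _ _ => hF'⟩
    · exact ⟨F, fun a b c => absurd ⟨a, b, c⟩ h⟩
  choose step hstep using hst
  let f : ℕ → Finset (Sym2 V) := fun n => step^[n] {s(v, u)}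
  have fs : ∀ n, f (n + 1) = step (f n) := fun n => Function.iterate_succ_apply' _ _ _
  have main : ∀ n, n < G.edgeFinset.card →
      s(v, u) ∈ f n ∧ f n ⊆ G.edgeFinset ∧ (f n).card = n + 1 := by
    intro n
    induction n with
    | zero => intro _; refine ⟨by simp [f], ?_, by simp [f]⟩; simp [f, hvu]
    | succ n ih =>
      intro hn
      obtain ⟨a, b, c⟩ := ih (by omega)
      have := hstep (f n) a b (by intro h; rw [h] at c; omega)
      rw [fs]
      exact ⟨this.1.1 a, this.2.1, by rw [this.2.2.1, c]⟩
  have main2 : ∀ n, n + 1 < G.edgeFinset.card → f n ⊂ f (n + 1) ∧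
      ∀ e' ∈ f (n + 1) \ f n, ∃ e'' ∈ f n, edgeAdj e' e'' := by
    intro n hn
    obtain ⟨a, b, c⟩ := main n (by omega)
    have := hstep (f n) a b (by intro h; rw [h] at c; omega)
    rw [fs]
    exact ⟨this.1, this.2.2.2⟩
  refine ⟨fun k => f k, ⟨fun k => (main k k.2).2.1, fun k => (main k k.2).2.2, ?_, ?_, ?_⟩,
    fun k => (main k k.2).1, ?_⟩
  · intro k l hkl
    have := main2 k (by rw [hkl]; exact l.2)
    rw [hkl] at this
    exact this.1
  · intro k hk
    exact ⟨s(v, u), (main k k.2).1, by simp⟩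
  · intro k l hkl
    have := main2 k (by rw [hkl]; exact l.2)
    rw [hkl] at this
    exact this.2
  · intro k hk
    simp [f, hk]

lemma exists_q {v u : V} (hne : v ≠ u) (F : Finset (Sym2 V)) (he : s(v, u) ∈ F) :
    ∃ q ∈ TE F, q v = Pi.single u 1 ∧ q u = Pi.single v 1 := by
  have hnb : ∀ x, ∃ y, memVerts F x → s(x, y) ∈ F := by
    intro x
    by_cases h : memVerts F x
    · obtain ⟨e, heF, hx⟩ := h
      obtain ⟨y, rfl⟩ := Sym2.mem_iff_exists.1 hx
      exact ⟨y, fun _ => heF⟩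
    · exact ⟨x, fun h' => absurd h' h⟩
  choose nb hnb using hnb
  let nb' : V → V := fun x => if x = v then u else if x = u then v else nb x
  have hnb' : ∀ x, memVerts F x → s(x, nb' x) ∈ F := by
    intro x hx
    by_cases h1 : x = v
    · simp only [nb', h1, if_true]; exact he
    · by_cases h2 : x = u
      · simp only [nb', h2, if_true, hne.symm, if_false]; rwa [Sym2.eq_swap]
      · simp only [nb', h1, h2, if_false]; exact hnb x hx
  have mv : memVerts F v := ⟨_, he, by simp⟩
  have mu : memVerts F u := ⟨_, he, by simp⟩
  refine ⟨fun x => if memVerts F x then Pi.single (nb' x) 1 else 0, ⟨?_, ?_, ?_⟩, ?_, ?_⟩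
  · intro x y
    by_cases h : memVerts F x
    · simp only [h, if_true]
      by_cases hy : y = nb' x
      · subst hy; simp
      · simp [Pi.single_apply, hy]
    · simp [h]
  · intro x hx
    simp [hx]
  · intro x y hxy
    by_cases h : memVerts F x
    · simp only [h, if_true] at hxy
      by_cases hy : y = nb' x
      · subst hy; exact hnb' x h
      · simp [Pi.single_apply, hy] at hxy
    · simp [h] at hxy
  · simp [mv, nb']
  · simp [mu, nb', hne.symm]

def edgeMeas {v u : V} (hne : v ≠ u) : ProbMeas V :=
  ⟨fun x => if x = v ∨ x = u then 1/2 else 0, fun x => by dsimp only; split_ifs <;> norm_num, by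
    rw [Fintype.sum_eq_add v u hne]
    · simp; norm_num
    · rintro x ⟨h1, h2⟩; simp [h1, h2]⟩

lemma ereal_sum {ι : Type} (s : Finset ι) (f : ι → ℝ) :
    ((∑ i ∈ s, f i : ℝ) : EReal) = ∑ i ∈ s, (f i : EReal) := by
  induction s using Finset.induction_on with
  | empty => simp
  | insert a s ha ih => rw [Finset.sum_insert ha, Finset.sum_insert ha, EReal.coe_add, ih]

lemma Ifun_eq (G : SimpleGraph V) [DecidableRel G.Adj] {v u : V}
    (hvu : G.Adj v u) {δ : ℝ} (hδ : 0 < δ) (m : ℝ)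
    (hlow : ∀ F, F ⊆ G.edgeFinset → s(v, u) ∈ F → m ≤ hcost G v u δ F)
    (Es : Fin G.edgeFinset.card → Finset (Sym2 V)) (hEs : Es ∈ seqE G v)
    (hee : ∀ k, s(v, u) ∈ Es k)
    (k0 : Fin G.edgeFinset.card) (hk : hcost G v u δ (Es k0) = m) :
    Ifun G v δ (edgeMeas hvu.ne) = (m : EReal) := by
  have hs0 : ∀ x, x ≠ v ∧ x ≠ u → (edgeMeas hvu.ne).1 x = 0 := by
    rintro x ⟨h1, h2⟩; simp [edgeMeas, h1, h2]
  unfold Ifun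
  apply le_antisymm
  · apply sInf_le
    have hq := fun k => exists_q hvu.ne (Es k) (hee k)
    choose qs hqs hv hu using hq
    have hsup : ∀ k x, (edgeMeas hvu.ne).1 x ≠ 0 → memVerts (Es k) x := by
      intro k x hx
      have : x = v ∨ x = u := by
        by_contra h; push Not at h; exact hx (hs0 x h)
      exact ⟨_, hee k, by simpa using this⟩
    have hinv : ∀ k, Invariant (edgeMeas hvu.ne).1 (qs k) := by
      intro k y
      rw [Fintype.sum_eq_add v u hvu.ne]
      · rw [hv, hu]
        have := hvu.ne
        by_cases h1 : y = v
        · subst h1; simp [edgeMeas, this]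
        · by_cases h2 : y = u
          · subst h2; simp [edgeMeas, this.symm]
          · simp [edgeMeas, h1, h2]
      · intro x hx; rw [hs0 x hx, zero_mul]
    refine ⟨fun _ => edgeMeas hvu.ne, Pi.single k0 1, Es, qs, hEs, ?_, by simp, hsup, ?_, hqs,
      hinv, ?_⟩
    · intro k
      by_cases h : k = k0
      · subst h; simp
      · simp [Pi.single_apply, h]
    · intro x
      rw [← Finset.sum_mul]; simp
    · rw [Finset.sum_eq_single k0]
      · rw [(key G hvu hδ (Es k0) (hEs.1 k0) _ hs0 (hsup k0) _ (hqs k0) (hinv k0)).2, hk]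
        simp
      · intro b _ hb
        simp [Pi.single_apply, hb]
      · simp
  · apply le_sInf
    rintro c ⟨νs, r, Es, qs, hE, hr, hr1, hsup, hmix, hqs, hinv, rfl⟩
    have : (m : EReal) = ((∑ k, r k * m : ℝ) : EReal) := by
      rw [← Finset.sum_mul, hr1, one_mul]
    rw [this, ereal_sum]
    apply Finset.sum_le_sum
    intro k _
    rcases (hr k).eq_or_lt with h0 | h0
    · rw [← h0]; simp
    · have hsk : ∀ x, x ≠ v ∧ x ≠ u → (νs k).1 x = 0 := by
        intro x hx
        have h1 := hmix x
        rw [hs0 x hx, Finset.sum_eq_zero_iff_of_nonneg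
          (fun i _ => mul_nonneg (hr i) ((νs i).2.1 x))] at h1
        have := h1 k (Finset.mem_univ k)
        rcases mul_eq_zero.1 this with h | h
        · linarith
        · exact h
      obtain ⟨h1, h2⟩ := key G hvu hδ (Es k) (hE.1 k) _ hsk (hsup k) _ (hqs k) (hinv k)
      rw [h2, ← EReal.coe_mul, EReal.coe_le_coe_iff]
      exact mul_le_mul_of_nonneg_left (hlow _ (hE.1 k) h1) h0.le

lemma calc_aux (f : ℝ → ℝ) (a b : ℝ) (ha : 0 ≤ a) (hb : 0 ≤ b) (hab : 0 < a + b) (c : ℝ)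
    (h1 : ∀ d, 0 < d → d ≤ 1 → f d = c)
    (h2 : ∀ d, 1 ≤ d → f d = (Real.log ((d + a) / d) + Real.log ((d + b) / d)) / 2) :
    ¬ DifferentiableAt ℝ f 1 := by
  intro hd
  have hD := hd.hasDerivAt
  have l : HasDerivWithinAt f 0 (Set.Iic 1) 1 := by
    apply (hasDerivWithinAt_const (1 : ℝ) (Set.Iic 1) c).congr_of_eventuallyEq_of_mem
    · filter_upwards [self_mem_nhdsWithin,
        mem_nhdsWithin_of_mem_nhds (lt_mem_nhds (zero_lt_one (α := ℝ)))] with d hd1 hd2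
      exact h1 d hd2 hd1
    · simp
  have e0 : deriv f 1 = 0 :=
    (uniqueDiffWithinAt_Iic (1 : ℝ)).eq_deriv _ hD.hasDerivWithinAt l
  have hlog : ∀ a : ℝ, 0 ≤ a → HasDerivAt (fun d : ℝ => Real.log ((d + a) / d))
      (-(a / (1 + a))) 1 := by
    intro a ha
    have h0 : HasDerivAt (fun d : ℝ => (d + a) / d) ((1 * 1 - (1 + a) * 1) / 1 ^ 2) 1 :=
      ((hasDerivAt_id' (1 : ℝ)).add_const a).fun_div (hasDerivAt_id' (1 : ℝ)) (by simp)
    have h := h0.log (by simp; positivity)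
    convert h using 1
    simp
    ring
  have hr := (((hlog a ha).add (hlog b hb)).div_const 2)
  have r : HasDerivWithinAt f ((-(a / (1 + a)) + -(b / (1 + b))) / 2) (Set.Ici 1) 1 := by
    apply hr.hasDerivWithinAt.congr_of_mem
    · intro d hd; exact h2 d hd
    · simp
  have e1 := (uniqueDiffWithinAt_Ici (1 : ℝ)).eq_deriv _ hD.hasDerivWithinAt r
  rw [e0] at e1
  have p1 : 0 ≤ a / (1 + a) := by positivity
  have p2 : 0 ≤ b / (1 + b) := by positivity
  rcases ha.eq_or_lt with h | h
  · have : 0 < b := by linarith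
    have : 0 < b / (1 + b) := by positivity
    linarith
  · have : 0 < a / (1 + a) := by positivity
    linarith

lemma deg_big (G : SimpleGraph V) [DecidableRel G.Adj] (hG : G.Connected)
    (hV : 3 ≤ Fintype.card V) {v u : V} (hvu : G.Adj v u) :
    2 < G.degree v + G.degree u := by
  by_contra hcon
  have d1 : 0 < G.degree v := (G.degree_pos_iff_exists_adj v).2 ⟨u, hvu⟩
  have d2 : 0 < G.degree u := (G.degree_pos_iff_exists_adj u).2 ⟨v, hvu.symm⟩
  have e1 : (G.neighborFinset v).card ≤ 1 := by
    rw [SimpleGraph.card_neighborFinset_eq_degree]; omega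
  have e2 : (G.neighborFinset u).card ≤ 1 := by
    rw [SimpleGraph.card_neighborFinset_eq_degree]; omega
  have hall : ∀ y, y = v ∨ y = u := by
    apply closed_all G hG (fun y => y = v ∨ y = u) v (Or.inl rfl)
    rintro x y (rfl | rfl) hxy
    · right
      exact Finset.card_le_one.1 e1 y (by simpa using hxy) u (by simpa using hvu)
    · left
      exact Finset.card_le_one.1 e2 y (by simpa using hxy) v (by simpa using hvu.symm)
  have : (Finset.univ : Finset V) ⊆ {v, u} := fun x _ => by simpa using hall x
  have := (Finset.card_le_card this).trans Finset.card_le_two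
  rw [Finset.card_univ] at this
  omega

end Aux

/-- For some `μ`, the map `δ ↦ I_δ(μ)` is not differentiable at `δ = 1`. -/
theorem orrw_rate_not_differentiable {V : Type} [Fintype V] [DecidableEq V]
    (G : SimpleGraph V) [DecidableRel G.Adj] (hG : G.Connected)
    (hV : 3 ≤ Fintype.card V) (v₁ : V) :
    ∃ μ : ProbMeas V, ¬ DifferentiableAt ℝ (fun d : ℝ => (Ifun G v₁ d μ).toReal) 1 := by
  have : Nontrivial V := Fintype.one_lt_card_iff_nontrivial.1 (by omega)
  obtain ⟨u, hvu⟩ := hG.preconnected.exists_adj_of_nontrivial v₁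
  obtain ⟨Es, hEs, hee, hE0⟩ := exists_seq G hG hvu
  have hdeg := deg_big G hG hV hvu
  have d1 : 0 < G.degree v₁ := (G.degree_pos_iff_exists_adj v₁).2 ⟨u, hvu⟩
  have d2 : 0 < G.degree u := (G.degree_pos_iff_exists_adj u).2 ⟨v₁, hvu.symm⟩
  have d1' : (1 : ℝ) ≤ G.degree v₁ := by exact_mod_cast d1
  have d2' : (1 : ℝ) ≤ G.degree u := by exact_mod_cast d2
  have hdeg' : (2 : ℝ) < G.degree v₁ + G.degree u := by exact_mod_cast hdeg
  have hb : 0 < G.edgeFinset.card := Finset.card_pos.2 ⟨s(v₁, u), by simpa using hvu⟩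
  have hlast : Es ⟨G.edgeFinset.card - 1, by omega⟩ = G.edgeFinset := by
    apply Finset.eq_of_subset_of_card_le (hEs.1 _)
    rw [hEs.2.1]
    simp only
    omega
  refine ⟨edgeMeas hvu.ne, ?_⟩
  apply calc_aux _ ((G.degree v₁ : ℝ) - 1) ((G.degree u : ℝ) - 1) (by linarith) (by linarith)
    (by linarith) ((Real.log (G.degree v₁) + Real.log (G.degree u)) / 2)
  · intro d hd0 hd1
    rw [Ifun_eq G hvu hd0 _ ?_ Es hEs hee ⟨G.edgeFinset.card - 1, by omega⟩ ?_]
    · exact EReal.toReal_coe _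
    · intro F hF he
      have a1 : (G.degree v₁ : ℝ) ≤ Ssum G d F v₁ / d :=
        (le_div_iff₀ hd0).2 (Ssum_ge_low G hd1 F v₁)
      have a2 : (G.degree u : ℝ) ≤ Ssum G d F u / d :=
        (le_div_iff₀ hd0).2 (Ssum_ge_low G hd1 F u)
      have b1 := Real.log_le_log (by linarith) a1
      have b2 := Real.log_le_log (by linarith) a2
      unfold hcost; linarith
    · rw [hlast]
      unfold hcost
      rw [Ssum_full, Ssum_full, mul_div_cancel_right₀ _ hd0.ne', mul_div_cancel_right₀ _ hd0.ne']
  · intro d hd1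
    have hd0 : 0 < d := by linarith
    rw [Ifun_eq G hvu hd0 _ ?_ Es hEs hee ⟨0, hb⟩ ?_]
    · exact EReal.toReal_coe _
    · intro F hF he
      have a1 := (div_le_div_iff_of_pos_right hd0).2 (Ssum_ge_high G hd1 F hvu he)
      have a2 := (div_le_div_iff_of_pos_right hd0).2
        (Ssum_ge_high G hd1 F hvu.symm (by rwa [Sym2.eq_swap]))
      have b1 := Real.log_le_log (div_pos (by linarith) hd0) a1
      have b2 := Real.log_le_log (div_pos (by linarith) hd0) a2
      unfold hcost; linarith
    · rw [hE0 _ rfl]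
      unfold hcost
      rw [Ssum_single G d hvu, Sym2.eq_swap, Ssum_single G d hvu.symm]

end ORRW
end
end
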